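/- arXiv:1108.4492 — 6 statements merged into one kernel-verified Lean document; each statement's English description precedes it below -/
import Mathlib

section
/- Let N be a positive integer, let η_1,…,η_N be pairwise distinct complex numbers, let ζ_1,…,ζ_N be arbitrary complex numbers, and let z be a complex number with z ≠ η_k for all k. Then Σ_{k=1}^{N} [∏_{j=1}^{N} (ζ_j − η_k)] / [(z − η_k) ∏_{j=1, j≠k}^{N} (η_j − η_k)] = 1 − ∏_{j=1}^{N} (ζ_j − z)/(η_j − z). -/
/-!
Let `Q = ∏ (X - η j)` and `R = ∏ (X - ζ j)`. Both are monic of degree `N`, so `Q - R` has degree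
less than `N` and coincides with its Lagrange interpolant at the nodes `η k`, where its value is
`-R (η k)`. Evaluating the interpolant at `z` (first barycentric form) and dividing by `Q z`
gives the partial fraction expansion of `1 - R z / Q z`, which is the claim once
the signs of the factors are reversed.
-/

open Polynomial in
theorem stmt_7 (N : ℕ) (hN : 0 < N) (η ζ : Fin N → ℂ) (hη : Function.Injective η)
    (z : ℂ) (hz : ∀ k, z ≠ η k) :
    ∑ k : Fin N,
        (∏ j : Fin N, (ζ j - η k)) /
          ((z - η k) * ∏ j ∈ Finset.univ.erase k, (η j - η k))
      = 1 - ∏ j : Fin N, (ζ j - z) / (η j - z) := by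
  set Q : ℂ[X] := Lagrange.nodal Finset.univ η with hQ
  set R : ℂ[X] := Lagrange.nodal Finset.univ ζ with hR
  have hdeg : (Q - R).degree < (Finset.univ : Finset (Fin N)).card := by
    have h : (Q - R).degree < Q.degree :=
      degree_sub_lt_left (by simp [hQ, hR, Lagrange.degree_nodal]) Lagrange.nodal_ne_zero
        (by rw [hQ, hR, Lagrange.nodal_monic.leadingCoeff, Lagrange.nodal_monic.leadingCoeff])
    rwa [hQ, Lagrange.degree_nodal] at h
  have hinterp := congrArg (eval z) (Lagrange.eq_interpolate (v := η) hη.injOn hdeg)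
  rw [Lagrange.eval_interpolate_not_at_node _ (fun k _ => hz k), eval_sub] at hinterp
  have hQz : Q.eval z ≠ 0 := Lagrange.eval_nodal_not_at_node fun k _ => hz k
  have hprod : ∏ j : Fin N, (ζ j - z) / (η j - z) = R.eval z / Q.eval z := by
    rw [hQ, hR, Lagrange.eval_nodal, Lagrange.eval_nodal, ← Finset.prod_div_distrib]
    refine Finset.prod_congr rfl fun j _ => ?_
    rw [← neg_sub z, ← neg_sub z (η j), neg_div_neg_eq]
  have hsum : 1 - R.eval z / Q.eval z = (Q.eval z - R.eval z) / Q.eval z := by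
    field_simp
  rw [hprod, hsum, hinterp, mul_div_cancel_left₀ _ hQz]
  refine Finset.sum_congr rfl fun k _ => ?_
  have hQk : Q.eval (η k) = 0 := Lagrange.eval_nodal_at_node (Finset.mem_univ k)
  -- The numerator has one factor more than the denominator product, so reversing all signs
  -- leaves a single `-1`, which matches the value `-R (η k)` of `Q - R` at the node.
  have hnum : ∏ j : Fin N, (ζ j - η k) = (-1) ^ N * R.eval (η k) := by
    have hconst : (-1 : ℂ) ^ N = ∏ _j : Fin N, (-1 : ℂ) := by simp
    rw [hR, Lagrange.eval_nodal, hconst, ← Finset.prod_mul_distrib]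
    exact Finset.prod_congr rfl fun j _ => by ring
  have hden : ∏ j ∈ Finset.univ.erase k, (η j - η k)
      = (-1) ^ (N - 1) * ∏ j ∈ Finset.univ.erase k, (η k - η j) := by
    have hcard : (Finset.univ.erase k).card = N - 1 := by simp
    rw [← hcard, ← Finset.prod_const, ← Finset.prod_mul_distrib]
    exact Finset.prod_congr rfl fun j _ => by ring
  have hpow : (-1 : ℂ) ^ N = -(-1) ^ (N - 1) := by
    obtain ⟨n, rfl⟩ : ∃ n, N = n + 1 := ⟨N - 1, by omega⟩
    simp [pow_succ]
  have hs : (-1 : ℂ) ^ (N - 1) ≠ 0 := by simp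
  rw [hnum, hden, hpow, eval_sub, hQk, Lagrange.nodalWeight, Finset.prod_inv_distrib]
  have hzk : z - η k ≠ 0 := sub_ne_zero.mpr (hz k)
  have hP : ∏ j ∈ Finset.univ.erase k, (η k - η j) ≠ 0 :=
    Finset.prod_ne_zero_iff.mpr fun j hj =>
      sub_ne_zero.mpr (hη.ne (Finset.ne_of_mem_erase hj).symm)
  field_simp
  ring
end

section
/- Let N be a positive integer, let η_1,…,η_N be pairwise distinct complex numbers, and let ζ_1,…,ζ_N be arbitrary complex numbers. Then Σ_{k=1}^{N} [∏_{j=1}^{N} (ζ_j − η_k)] / [∏_{j=1, j≠k}^{N} (η_j − η_k)] = Σ_{k=1}^{N} (ζ_k − η_k). -/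
/-! The polynomial `P = ∏ (X - ζ j) - ∏ (X - η j)` has degree less than `N`, because both products
are monic of degree `N`. By Lagrange interpolation at the nodes `η k`, its coefficient of `X ^ (N-1)`
is `∑ P(η k) / ∏_{j ≠ k} (η k - η j)`, where `P(η k) = ∏ (η k - ζ j)`. By Vieta, the same
coefficient is `∑ (η k - ζ k)`. Reversing the sign of all factors (`N` in each numerator, `N - 1`
in each denominator) turns this equality into the claimed one. -/

open Polynomial in
theorem stmt_8 (N : ℕ) (hN : 0 < N) (η ζ : Fin N → ℂ) (hη : Function.Injective η) :
    ∑ k : Fin N,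
        (∏ j : Fin N, (ζ j - η k)) / (∏ j ∈ Finset.univ.erase k, (η j - η k))
      = ∑ k : Fin N, (ζ k - η k) := by
  set A : ℂ[X] := ∏ j, (X - C (ζ j)) with hA
  set B : ℂ[X] := ∏ j, (X - C (η j)) with hB
  have hmA : A.Monic := monic_prod_X_sub_C _ _
  have hmB : B.Monic := monic_prod_X_sub_C _ _
  have hdA : A.degree = N := by simp [hA, degree_prod]
  have hdB : B.degree = N := by simp [hB, degree_prod]
  have hcard : (Finset.univ : Finset (Fin N)).card = N := by simp
  have hdeg : (A - B).degree < N := by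
    rw [← hdA]
    exact degree_sub_lt_left (hdA.trans hdB.symm) hmA.ne_zero (hmA.trans hmB.symm)
  have hcoeff : (A - B).coeff (N - 1) = -∑ k, (ζ k - η k) := by
    have h1 := prod_X_sub_C_coeff_card_pred Finset.univ ζ (by simpa using hN)
    have h2 := prod_X_sub_C_coeff_card_pred Finset.univ η (by simpa using hN)
    rw [hcard] at h1 h2
    rw [coeff_sub, hA, hB, h1, h2, Finset.sum_sub_distrib]
    ring
  have hterm (k : Fin N) :
      (∏ j, (ζ j - η k)) / (∏ j ∈ Finset.univ.erase k, (η j - η k))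
        = -((A - B).eval (η k) / ∏ j ∈ Finset.univ.erase k, (η k - η j)) := by
    have hBk : B.eval (η k) = 0 := by
      rw [hB, eval_prod]
      exact Finset.prod_eq_zero (Finset.mem_univ k) (by simp)
    have hAk : A.eval (η k) = (-1) ^ N * ∏ j, (ζ j - η k) := by
      simp only [hA, eval_prod, eval_sub, eval_X, eval_C]
      rw [← Finset.prod_congr rfl fun j _ => neg_sub (ζ j) (η k), Finset.prod_neg, hcard]
    have hden : ∏ j ∈ Finset.univ.erase k, (η k - η j)
        = (-1) ^ (N - 1) * ∏ j ∈ Finset.univ.erase k, (η j - η k) := by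
      rw [← Finset.prod_congr rfl fun j _ => neg_sub (η j) (η k), Finset.prod_neg,
        Finset.card_erase_of_mem (Finset.mem_univ k), hcard]
    obtain ⟨n, rfl⟩ := Nat.exists_eq_succ_of_ne_zero hN.ne'
    rw [eval_sub, hBk, hAk, hden, sub_zero, Nat.succ_sub_one, pow_succ, mul_assoc,
      mul_div_mul_left _ _ (pow_ne_zero n (by norm_num : (-1 : ℂ) ≠ 0))]
    ring
  have hlag := Lagrange.coeff_eq_sum (s := Finset.univ) (v := η) hη.injOn (P := A - B)
    (by rwa [hcard])
  rw [hcard] at hlag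
  rw [Finset.sum_congr rfl fun k _ => hterm k, Finset.sum_neg_distrib, ← hlag, hcoeff, neg_neg]
end

section
/- Let N be a positive integer, let ξ_1,…,ξ_N be pairwise distinct complex numbers and η_1,…,η_N be complex numbers with ξ_k ≠ η_n for all indices k, n, and let c be a complex number. Define g_k = c (ξ_k − η_k) ∏_{j=1, j≠k}^{N} (ξ_k − η_j)/(ξ_k − ξ_j) for k = 1,…,N. Then for every n with 1 ≤ n ≤ N one has Σ_{k=1}^{N} g_k/(ξ_k − η_n) = c; that is, these g_k solve the linear system Σ_{k=1}^{N} g_k/(ξ_k − η_n) = c (n = 1,…,N). -/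
/-!
Fix `n` and let `P = ∏_{j ≠ n} (X - η_j)`, a monic polynomial of degree `N - 1`. Up to the
factor `c`, the summand `g_k / (ξ_k - η_n)` is `P(ξ_k) / ∏_{j ≠ k} (ξ_k - ξ_j)`. By Lagrange
interpolation at the `N` nodes `ξ_k` (`Lagrange.leadingCoeff_eq_sum`), these terms sum to the
leading coefficient of `P`, which is `1`.
-/

theorem stmt_10 (N : ℕ) (hN : 0 < N) (ξ η : Fin N → ℂ) (hξ : Function.Injective ξ)
    (hξη : ∀ k n, ξ k ≠ η n) (c : ℂ) (g : Fin N → ℂ)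
    (hg : ∀ k, g k = c * (ξ k - η k) *
      ∏ j ∈ Finset.univ.erase k, (ξ k - η j) / (ξ k - ξ j)) (n : Fin N) :
    ∑ k : Fin N, g k / (ξ k - η n) = c := by
  have hdeg : (Finset.univ : Finset (Fin N)).card =
      (Lagrange.nodal (Finset.univ.erase n) η).degree + 1 := by
    rw [Lagrange.degree_nodal, Finset.card_erase_of_mem (Finset.mem_univ n), Finset.card_fin]
    exact_mod_cast (Nat.sub_add_cancel hN).symm
  have hsum := Lagrange.leadingCoeff_eq_sum (s := Finset.univ) (v := ξ) hξ.injOn hdeg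
  rw [Lagrange.nodal_monic.leadingCoeff] at hsum
  rw [← mul_one c, hsum, Finset.mul_sum]
  refine Finset.sum_congr rfl fun k _ => ?_
  have hk := Finset.mul_prod_erase Finset.univ (fun j => ξ k - η j) (Finset.mem_univ k)
  have hn := Finset.mul_prod_erase Finset.univ (fun j => ξ k - η j) (Finset.mem_univ n)
  have hne : ξ k - η n ≠ 0 := sub_ne_zero.mpr (hξη k n)
  rw [hg, Lagrange.eval_nodal, Finset.prod_div_distrib, div_eq_iff hne, mul_assoc, mul_assoc,
    ← mul_div_assoc, hk, ← hn]
  ring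
end

section
/- Let N be a positive integer, let ξ_1,…,ξ_N be pairwise distinct complex numbers, let η_1,…,η_N be pairwise distinct complex numbers with ξ_k ≠ η_n for all indices k, n, and let c_1,…,c_N be arbitrary complex numbers. Define, for k = 1,…,N, g_k = Σ_{s=1}^{N} c_s (ξ_k − η_s) [∏_{j=1, j≠k}^{N} (ξ_j − η_s)/(ξ_j − ξ_k)] · [∏_{j=1, j≠s}^{N} (η_j − ξ_k)/(η_j − η_s)]. Then for every n with 1 ≤ n ≤ N one has Σ_{k=1}^{N} g_k/(ξ_k − η_n) = c_n; that is, these g_k solve the linear system Σ_{k=1}^{N} g_k/(ξ_k − η_n) = c_n (n = 1,…,N). -/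
/-!
Let `P(x) = ∏_{j ≠ n} (x - η_j)`, let `L_k` be the Lagrange basis polynomials at the nodes `ξ`, and
let `w_s = ∏_{j ≠ s} (η_s - η_j)⁻¹`. Since
`(ξ_k - η_s) ∏_{j ≠ s} (ξ_k - η_j) = (ξ_k - η_n) P(ξ_k)`, the `s`-th summand of `g_k / (ξ_k - η_n)`
equals `c_s w_s P(ξ_k) L_k(η_s)`. As `deg P = N - 1 < N`, Lagrange interpolation at the nodes `ξ`
gives `∑_k P(ξ_k) L_k(η_s) = P(η_s)`, which vanishes for `s ≠ n` and equals `w_n⁻¹` for `s = n`.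
-/

open Lagrange Polynomial in
/-- Lagrange interpolation at the `ξ k` reproduces `∏_{j ≠ n} (X - η_j)`, here evaluated at `y`. -/
lemma interpolate_prod_erase (N : ℕ) (ξ η : Fin N → ℂ) (hξ : Function.Injective ξ)
    (n : Fin N) (y : ℂ) :
    ∑ k : Fin N, (∏ j ∈ Finset.univ.erase n, (ξ k - η j)) *
      (∏ j ∈ Finset.univ.erase k, (ξ j - y) / (ξ j - ξ k)) =
      ∏ j ∈ Finset.univ.erase n, (y - η j) := by
  have hdeg : (nodal (Finset.univ.erase n) η).degree < (Finset.univ : Finset (Fin N)).card := by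
    rw [degree_nodal]
    exact_mod_cast Finset.card_erase_lt_of_mem (Finset.mem_univ n)
  have h := congrArg (eval y) (eq_interpolate (v := ξ) hξ.injOn hdeg)
  rw [eval_nodal, interpolate_apply, eval_finsetSum] at h
  rw [h]
  refine Finset.sum_congr rfl fun k _ => ?_
  rw [eval_mul, eval_C, eval_nodal, Lagrange.basis, eval_prod]
  congr 1
  refine Finset.prod_congr rfl fun j _ => ?_
  rw [basisDivisor, eval_mul, eval_C, eval_sub, eval_X, eval_C, ← neg_sub y, ← neg_sub (ξ k),
    neg_div_neg_eq, div_eq_inv_mul]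

/-- Summand-wise form of `g k / (ξ k - η n)`: the dependence on `k` is through
`P(ξ_k) L_k(η_s)` only. -/
lemma summand_eq (N : ℕ) (ξ η : Fin N → ℂ) (hξη : ∀ k n, ξ k ≠ η n) (k s n : Fin N) (a b : ℂ) :
    a * (ξ k - η s) * b * (∏ j ∈ Finset.univ.erase s, (η j - ξ k) / (η j - η s)) / (ξ k - η n) =
      a * (∏ j ∈ Finset.univ.erase s, (η s - η j))⁻¹ *
        ((∏ j ∈ Finset.univ.erase n, (ξ k - η j)) * b) := by
  have hne : ξ k - η n ≠ 0 := sub_ne_zero.2 (hξη k n)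
  have h1 : (ξ k - η s) * ∏ j ∈ Finset.univ.erase s, (ξ k - η j) =
      (ξ k - η n) * ∏ j ∈ Finset.univ.erase n, (ξ k - η j) := by
    rw [Finset.mul_prod_erase _ (fun j => ξ k - η j) (Finset.mem_univ s),
      Finset.mul_prod_erase _ (fun j => ξ k - η j) (Finset.mem_univ n)]
  have h2 : ∏ j ∈ Finset.univ.erase s, (η j - ξ k) / (η j - η s) =
      (∏ j ∈ Finset.univ.erase s, (ξ k - η j)) * (∏ j ∈ Finset.univ.erase s, (η s - η j))⁻¹ := by
    rw [← div_eq_mul_inv, ← Finset.prod_div_distrib]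
    refine Finset.prod_congr rfl fun j _ => ?_
    rw [← neg_sub (ξ k), ← neg_sub (η s), neg_div_neg_eq]
  rw [h2, div_eq_iff hne]
  linear_combination a * b * (∏ j ∈ Finset.univ.erase s, (η s - η j))⁻¹ * h1

theorem stmt_11 (N : ℕ) (hN : 0 < N) (ξ η : Fin N → ℂ)
    (hξ : Function.Injective ξ) (hη : Function.Injective η)
    (hξη : ∀ k n, ξ k ≠ η n) (c : Fin N → ℂ) (g : Fin N → ℂ)
    (hg : ∀ k, g k = ∑ s : Fin N, c s * (ξ k - η s) *
      (∏ j ∈ Finset.univ.erase k, (ξ j - η s) / (ξ j - ξ k)) *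
      (∏ j ∈ Finset.univ.erase s, (η j - ξ k) / (η j - η s))) (n : Fin N) :
    ∑ k : Fin N, g k / (ξ k - η n) = c n := by
  simp_rw [hg, Finset.sum_div, summand_eq N ξ η hξη]
  rw [Finset.sum_comm]
  simp_rw [← Finset.mul_sum, interpolate_prod_erase N ξ η hξ n]
  rw [Finset.sum_eq_single n]
  · have h : ∏ j ∈ Finset.univ.erase n, (η n - η j) ≠ 0 :=
      Finset.prod_ne_zero_iff.2 fun j hj =>
        sub_ne_zero.2 fun e => (Finset.ne_of_mem_erase hj) (hη e).symm
    rw [mul_assoc, inv_mul_cancel₀ h, mul_one]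
  · intro s _ hs
    -- the factor `j = s` of `P(η_s)` is zero
    rw [Finset.prod_eq_zero (Finset.mem_erase.2 ⟨hs, Finset.mem_univ s⟩) (sub_self _), mul_zero]
  · simp
end

section
/- Let N be a positive integer, let ξ_1,…,ξ_N be pairwise distinct complex numbers, let η_1,…,η_N be pairwise distinct complex numbers with ξ_m ≠ η_n for all m, n, and let f_1,…,f_N and g_1,…,g_N be nonzero complex numbers. Let M be the N×N matrix with entries M_{nm} = f_n g_m/(ξ_m − η_n), and let W be the N×N matrix with entries W_{nm} = ((ξ_n − η_m)/(g_n f_m)) · [∏_{j=1, j≠n}^{N} (ξ_j − η_m)/(ξ_j − ξ_n)] · [∏_{j=1, j≠m}^{N} (η_j − ξ_n)/(η_j − η_m)]. Then M·W = I, i.e. W is the inverse matrix of M. -/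
/-!
Write `P(x) = ∏_{j ≠ n} (x - η_j) / ∏_{j ≠ k} (η_k - η_j)`, a polynomial of degree `N - 1`.
Since `(x - η_k) ∏_{j ≠ k} (x - η_j) = (x - η_n) ∏_{j ≠ n} (x - η_j)`, the `(n, k)` entry of
`M * W` is `f_n / f_k` times `∑_m P(ξ_m) ℓ_m(η_k)`, where `ℓ_m` is the Lagrange basis polynomial
of the nodes `ξ`. Interpolation at the `N` nodes `ξ` is exact for `P`, so the sum equals
`P(η_k)`, which is `1` if `n = k` and `0` otherwise.
-/

/-- Lagrange interpolation at the nodes `ξ` of the nodal polynomial of the `η_j`, `j ≠ n`,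
evaluated at an arbitrary point `x`. -/
lemma sum_prod_erase_interpolate {N : ℕ} (ξ η : Fin N → ℂ) (hξ : Function.Injective ξ)
    (n : Fin N) (x : ℂ) :
    ∑ m, (∏ j ∈ Finset.univ.erase n, (ξ m - η j)) *
      (∏ j ∈ Finset.univ.erase m, (ξ j - x) / (ξ j - ξ m)) =
    ∏ j ∈ Finset.univ.erase n, (x - η j) := by
  have hdeg : (Lagrange.nodal (Finset.univ.erase n) η).degree
      < (Finset.univ : Finset (Fin N)).card := by
    rw [Lagrange.degree_nodal]
    exact_mod_cast Finset.card_erase_lt_of_mem (Finset.mem_univ n)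
  have h := congrArg (Polynomial.eval x) (Lagrange.eq_interpolate (v := ξ) hξ.injOn hdeg)
  rw [Lagrange.interpolate_apply, Polynomial.eval_finsetSum, Lagrange.eval_nodal] at h
  rw [h]
  refine Finset.sum_congr rfl fun m _ => ?_
  rw [Polynomial.eval_mul, Polynomial.eval_C, Lagrange.eval_nodal, Lagrange.basis,
    Polynomial.eval_prod]
  congr 1
  refine Finset.prod_congr rfl fun j _ => ?_
  rw [Lagrange.basisDivisor, Polynomial.eval_mul, Polynomial.eval_C, Polynomial.eval_sub,
    Polynomial.eval_X, Polynomial.eval_C, ← neg_sub x, ← neg_sub (ξ m), neg_div_neg_eq,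
    div_eq_inv_mul]

theorem stmt_14 (N : ℕ) (hN : 0 < N) (ξ η : Fin N → ℂ)
    (hξ : Function.Injective ξ) (hη : Function.Injective η)
    (hξη : ∀ m n, ξ m ≠ η n) (f g : Fin N → ℂ)
    (hf : ∀ n, f n ≠ 0) (hg : ∀ n, g n ≠ 0)
    (M W : Matrix (Fin N) (Fin N) ℂ)
    (hM : ∀ n m, M n m = f n * g m / (ξ m - η n))
    (hW : ∀ n m, W n m = ((ξ n - η m) / (g n * f m)) *
      (∏ j ∈ Finset.univ.erase n, (ξ j - η m) / (ξ j - ξ n)) *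
      (∏ j ∈ Finset.univ.erase m, (η j - ξ n) / (η j - η m))) :
    M * W = 1 := by
  ext n k
  have hD : ∏ j ∈ Finset.univ.erase k, (η k - η j) ≠ 0 :=
    Finset.prod_ne_zero_iff.2 fun j hj =>
      sub_ne_zero.2 fun h => (Finset.ne_of_mem_erase hj) (hη h).symm
  have hterm : ∀ m, M n m * W m k =
      f n / f k / (∏ j ∈ Finset.univ.erase k, (η k - η j)) *
      ((∏ j ∈ Finset.univ.erase n, (ξ m - η j)) *
      (∏ j ∈ Finset.univ.erase m, (ξ j - η k) / (ξ j - ξ m))) := by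
    intro m
    have hprod : ∏ j ∈ Finset.univ.erase k, (η j - ξ m) / (η j - η k) =
        (∏ j ∈ Finset.univ.erase k, (ξ m - η j)) /
          ∏ j ∈ Finset.univ.erase k, (η k - η j) := by
      rw [← Finset.prod_div_distrib]
      refine Finset.prod_congr rfl fun j _ => ?_
      rw [← neg_sub (ξ m), ← neg_sub (η k), neg_div_neg_eq]
    -- Both sides are the full product over all `j`.
    have hswap : (ξ m - η k) * ∏ j ∈ Finset.univ.erase k, (ξ m - η j) =
        (ξ m - η n) * ∏ j ∈ Finset.univ.erase n, (ξ m - η j) := by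
      rw [Finset.mul_prod_erase _ (fun j => ξ m - η j) (Finset.mem_univ k),
        Finset.mul_prod_erase _ (fun j => ξ m - η j) (Finset.mem_univ n)]
    have h1 := sub_ne_zero.2 (hξη m n)
    have h2 := hf k
    have h3 := hg m
    rw [hM, hW, hprod]
    generalize (∏ j ∈ Finset.univ.erase m, (ξ j - η k) / (ξ j - ξ m)) = B
    field_simp
    linear_combination f n * B * hswap
  rw [Matrix.mul_apply, Finset.sum_congr rfl fun m _ => hterm m, ← Finset.mul_sum,
    sum_prod_erase_interpolate ξ η hξ n (η k)]
  by_cases hnk : n = k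
  · subst hnk
    rw [Matrix.one_apply_eq, div_self (hf n), one_div_mul_cancel hD]
  · rw [Matrix.one_apply_ne hnk, Finset.prod_eq_zero (i := k)
      (Finset.mem_erase.2 ⟨Ne.symm hnk, Finset.mem_univ k⟩) (sub_self _), mul_zero]
end

section
/- Let N be a positive integer and let α, β, η, ρ, γ be complex numbers with γ ≠ 1 and β ≠ 0; set a = α + ηρ/(1−γ) and b = βρ/(1−γ). Let U, V : ℕ → (N×N complex matrices) satisfy, for every ℓ ∈ ℕ, the recursion U(ℓ+1) = α·U(ℓ) + β·V(ℓ) + η·U(ℓ)·V(ℓ) and V(ℓ+1) = ρ·I + γ·V(ℓ). Define the matrices A = η·V(0) − (ηb/β)·I and B = β·V(0) − b·I, and, for natural numbers ℓ₁ ≤ ℓ₂+1, the ordered product P(ℓ₁, ℓ₂) = ∏_{j=ℓ₁}^{ℓ₂} (γ^j·A + a·I) (with P(ℓ₁, ℓ₂) = I when ℓ₁ > ℓ₂). Then for every ℓ ∈ ℕ: V(ℓ) = γ^ℓ·V(0) + ρ·((γ^ℓ − 1)/(γ − 1))·I, and U(ℓ) = U(0)·P(0, ℓ−1) + Σ_{k=1}^{ℓ}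 (γ^{k−1}·B + b·I)·P(k, ℓ−1), where the sum is empty (zero) for ℓ = 0. -/
/-!
The recursion for `V` is affine with fixed point `ρ / (1 - γ)`, which gives its closed form.
Substituting it, `β V(ℓ) = γ^ℓ B + b` and `α + η V(ℓ) = γ^ℓ A + a`, so the recursion for `U`
becomes the linear one `U(ℓ+1) = U(ℓ) (γ^ℓ A + a) + (γ^ℓ B + b)`. The formula for `U` is then
variation of constants, by induction on `ℓ` using `P18_succ` to append one factor to each product.
-/

/-- The ordered product `P(ℓ₁, ℓ₂) = ∏_{j=ℓ₁}^{ℓ₂} (γ^j · A + a · I)`, here written with a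
half-open index range: `P18 γ a A ℓ₁ ℓ₂ = ∏_{j=ℓ₁}^{ℓ₂-1} (γ^j · A + a · I)`, so that the
paper's `P(ℓ₁, ℓ₂)` is `P18 γ a A ℓ₁ (ℓ₂+1)`; it equals the identity matrix when the index
range is empty. All the factors commute, so the order is immaterial. -/
noncomputable def P18 {N : ℕ} (γ a : ℂ) (A : Matrix (Fin N) (Fin N) ℂ) (l₁ l₂ : ℕ) :
    Matrix (Fin N) (Fin N) ℂ :=
  ((List.range' l₁ (l₂ - l₁)).map
    (fun j => γ ^ j • A + a • (1 : Matrix (Fin N) (Fin N) ℂ))).prod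

theorem P18_self {N : ℕ} (γ a : ℂ) (A : Matrix (Fin N) (Fin N) ℂ) (l : ℕ) :
    P18 γ a A l l = 1 := by
  simp [P18]

theorem P18_succ {N : ℕ} (γ a : ℂ) (A : Matrix (Fin N) (Fin N) ℂ) {k l : ℕ} (h : k ≤ l) :
    P18 γ a A k (l + 1) =
      P18 γ a A k l * (γ ^ l • A + a • (1 : Matrix (Fin N) (Fin N) ℂ)) := by
  have h1 : l + 1 - k = (l - k) + 1 := by omega
  have h2 : k + (l - k) = l := by omega
  simp [P18, h1, List.range'_1_concat, h2]

theorem stmt_18 (N : ℕ) (hN : 0 < N) (α β η ρ γ : ℂ) (hγ : γ ≠ 1) (hβ : β ≠ 0)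
    (a b : ℂ) (ha : a = α + η * ρ / (1 - γ)) (hb : b = β * ρ / (1 - γ))
    (U V : ℕ → Matrix (Fin N) (Fin N) ℂ)
    (hU : ∀ ℓ : ℕ, U (ℓ + 1) = α • U ℓ + β • V ℓ + η • (U ℓ * V ℓ))
    (hV : ∀ ℓ : ℕ, V (ℓ + 1) = ρ • (1 : Matrix (Fin N) (Fin N) ℂ) + γ • V ℓ)
    (A B : Matrix (Fin N) (Fin N) ℂ)
    (hA : A = η • V 0 - (η * b / β) • (1 : Matrix (Fin N) (Fin N) ℂ))
    (hB : B = β • V 0 - b • (1 : Matrix (Fin N) (Fin N) ℂ)) :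
    ∀ ℓ : ℕ,
      V ℓ = γ ^ ℓ • V 0 + (ρ * ((γ ^ ℓ - 1) / (γ - 1))) • (1 : Matrix (Fin N) (Fin N) ℂ) ∧
      U ℓ = U 0 * P18 γ a A 0 ℓ
        + ∑ k ∈ Finset.Icc 1 ℓ,
            (γ ^ (k - 1) • B + b • (1 : Matrix (Fin N) (Fin N) ℂ)) * P18 γ a A k ℓ := by
  have h1 : γ - 1 ≠ 0 := sub_ne_zero.mpr hγ
  have h2 : 1 - γ ≠ 0 := sub_ne_zero.mpr hγ.symm
  have hVc : ∀ ℓ : ℕ, V ℓ = γ ^ ℓ • V 0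
      + (ρ * ((γ ^ ℓ - 1) / (γ - 1))) • (1 : Matrix (Fin N) (Fin N) ℂ) := by
    intro ℓ
    induction ℓ with
    | zero => simp
    | succ n ih =>
      rw [hV, ih]
      match_scalars <;> field_simp <;> ring
  have hβV : ∀ ℓ : ℕ, β • V ℓ = γ ^ ℓ • B + b • (1 : Matrix (Fin N) (Fin N) ℂ) := by
    intro ℓ
    rw [hVc ℓ, hB, hb, ← neg_sub γ 1]
    match_scalars <;> field_simp <;> ring
  have hηV : ∀ ℓ : ℕ, α • (1 : Matrix (Fin N) (Fin N) ℂ) + η • V ℓ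
      = γ ^ ℓ • A + a • (1 : Matrix (Fin N) (Fin N) ℂ) := by
    intro ℓ
    rw [hVc ℓ, hA, ha, hb, ← neg_sub γ 1]
    match_scalars <;> field_simp <;> ring
  have hUlin : ∀ ℓ : ℕ, U (ℓ + 1) =
      U ℓ * (γ ^ ℓ • A + a • (1 : Matrix (Fin N) (Fin N) ℂ))
        + (γ ^ ℓ • B + b • (1 : Matrix (Fin N) (Fin N) ℂ)) := by
    intro ℓ
    rw [hU, ← hβV, ← hηV, mul_add, mul_smul_comm, mul_smul_comm, mul_one]
    abel
  intro ℓ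
  refine ⟨hVc ℓ, ?_⟩
  induction ℓ with
  | zero => simp [P18_self]
  | succ n ih =>
    have hsum : ∑ k ∈ Finset.Icc 1 n,
          (γ ^ (k - 1) • B + b • (1 : Matrix (Fin N) (Fin N) ℂ)) * P18 γ a A k (n + 1)
        = (∑ k ∈ Finset.Icc 1 n,
          (γ ^ (k - 1) • B + b • (1 : Matrix (Fin N) (Fin N) ℂ)) * P18 γ a A k n)
            * (γ ^ n • A + a • (1 : Matrix (Fin N) (Fin N) ℂ)) := by
      rw [Finset.sum_mul]
      refine Finset.sum_congr rfl fun k hk => ?_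
      rw [P18_succ γ a A (Finset.mem_Icc.mp hk).2, mul_assoc]
    rw [Finset.sum_Icc_succ_top (by omega), hsum, P18_self, P18_succ γ a A n.zero_le,
      Nat.add_sub_cancel, mul_one, ← add_assoc, ← mul_assoc, ← add_mul, ← ih, hUlin]
end
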